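/- For all named GS4 derivations P with conclusion ⊢Γ,A∧B, the axiom graphs of the conjunction inversions satisfy ⟦inv_l(P, A∧B)⟧ ⊑ ⟦P⟧↾_{Γ,A} and ⟦inv_r(P, A∧B)⟧ ⊑ ⟦P⟧↾_{Γ,B}. -/

import Mathlib

open scoped Classical

noncomputable section

namespace GS4

/-- Named classical propositional formulas over atoms `α`, with names in `ℕ`. -/
inductive NForm (α : Type) : Type
  | atom : ℕ → α → NForm α
  | or   : NForm α → NForm α → NForm α
  | and  : NForm α → NForm α → NForm α

variable {α : Type}

/-- Name-preserving De Morgan negation, w.r.t. an involution `bar` on atoms. -/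
def negF (bar : α → α) : NForm α → NForm α
  | .atom x a => .atom x (bar a)
  | .or A B => .and (negF bar A) (negF bar B)
  | .and A B => .or (negF bar A) (negF bar B)

/-- The set of names occurring in a named formula. -/
def NForm.names : NForm α → Set ℕ
  | .atom x _ => {x}
  | .or A B => A.names ∪ B.names
  | .and A B => A.names ∪ B.names

/-- A named formula is sharing-free if every name occurs at most once in it. -/
def NForm.sharingFree : NForm α → Prop
  | .atom _ _ => True
  | .or A B => A.sharingFree ∧ B.sharingFree ∧ Disjoint A.names B.names
  | .and A B => A.sharingFree ∧ B.sharingFree ∧ Disjoint A.names B.names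

def NForm.isAtom : NForm α → Prop
  | .atom _ _ => True
  | _ => False

/-- Anonymous formulas (shapes): `A ≡ B` iff their shapes coincide. -/
inductive Shape (α : Type) : Type
  | atom : α → Shape α
  | or   : Shape α → Shape α → Shape α
  | and  : Shape α → Shape α → Shape α

def NForm.shape : NForm α → Shape α
  | .atom _ a => .atom a
  | .or A B => .or A.shape B.shape
  | .and A B => .and A.shape B.shape

/-- `HasAtom A x a`: the atomic formula `x:a` occurs in `A`. -/
def HasAtom : NForm α → ℕ → α → Prop
  | .atom y b, x, a => y = x ∧ b = a
  | .or A B, x, a => HasAtom A x a ∨ HasAtom B x a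
  | .and A B, x, a => HasAtom A x a ∨ HasAtom B x a

/-- Names of a finite set of named formulas. -/
def snames (Γ : Finset (NForm α)) : Set ℕ := ⋃ A ∈ Γ, A.names

/-- A finite set of named formulas is sharing-free if all its elements are
sharing-free with pairwise disjoint name sets. -/
def SFSet (Γ : Finset (NForm α)) : Prop :=
  (∀ A ∈ Γ, A.sharingFree) ∧
  ∀ A ∈ Γ, ∀ B ∈ Γ, A ≠ B → Disjoint A.names B.names

/-- `x:a` occurs in some formula of `Γ` (i.e. `Γ[x] = a` for sharing-free `Γ`). -/
def HasAtomS (Γ : Finset (NForm α)) (x : ℕ) (a : α) : Prop :=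
  ∃ A ∈ Γ, HasAtom A x a

/-- Branch sets of named formulas. -/
def BrF : NForm α → Set (Set ℕ)
  | .atom x _ => {{x}}
  | .or A B => {X | ∃ Y ∈ BrF A, ∃ Z ∈ BrF B, X = Y ∪ Z}
  | .and A B => BrF A ∪ BrF B

/-- Branch sets of sequents (finite sharing-free sets of named formulas). -/
def BrS (Γ : Finset (NForm α)) : Set (Set ℕ) :=
  {X | X ⊆ snames Γ ∧ ∀ A ∈ Γ, X ∩ A.names ∈ BrF A}

/-! ## Branch-labeled name graphs -/

/-- A branch-labeled name graph: vertices and a relation between unordered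
pairs of vertices and branch labels. -/
structure BLGraph : Type where
  verts : Set ℕ
  rel : Sym2 ℕ → Set ℕ → Prop

/-- Well-formedness of a bl-graph: related pairs consist of distinct vertices,
labels are sets of vertices, and each edge is included in its labels. -/
def BLGraph.IsBL (G : BLGraph) : Prop :=
  ∀ e X, G.rel e X → ¬ e.IsDiag ∧ X ⊆ G.verts ∧ ∀ v ∈ e, v ∈ X

def BLGraph.Edges (G : BLGraph) : Set (Sym2 ℕ) := {e | ∃ X, G.rel e X}

def BLGraph.Br (G : BLGraph) : Set (Set ℕ) := {X | ∃ e, G.rel e X}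

def BLGraph.union (G H : BLGraph) : BLGraph :=
  ⟨G.verts ∪ H.verts, fun e X => G.rel e X ∨ H.rel e X⟩

/-- Restriction `G↾_S` of a bl-graph. -/
def BLGraph.restrict (G : BLGraph) (S : Set ℕ) : BLGraph :=
  ⟨G.verts ∩ S, fun e X => G.rel e X ∧ X ⊆ S⟩

/-- The interface-relativized edge-branch relation `e ⊰^I_G X`. -/
def BLGraph.relI (G : BLGraph) (I : Set ℕ) (e : Sym2 ℕ) (X : Set ℕ) : Prop :=
  ∃ Y, G.rel e Y ∧ X = Y \ I

/-- `z 0, …, z (n-1)` is an `X`-labeled alternating path between `G` and `H`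
through the interface `I`. -/
def AltPath (G H : BLGraph) (I X : Set ℕ) (n : ℕ) (z : ℕ → ℕ) : Prop :=
  1 < n ∧
  (∀ i < n, ∀ j < n, z i = z j → i = j) ∧
  (∀ i, 0 < i → i + 1 < n → z i ∈ I) ∧
  ((∀ i, i + 1 < n →
      (Even i → G.relI I s(z i, z (i + 1)) X) ∧ (¬ Even i → H.relI I s(z i, z (i + 1)) X)) ∨
   (∀ i, i + 1 < n →
      (Even i → H.relI I s(z i, z (i + 1)) X) ∧ (¬ Even i → G.relI I s(z i, z (i + 1)) X)))

/-- Composition of bl-graphs over an interface `I`. -/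
def BLGraph.comp (G H : BLGraph) (I : Set ℕ) : BLGraph :=
  ⟨(G.verts ∪ H.verts) \ I,
   fun e X => ∃ n z, AltPath G H I X n z ∧ z 0 ∉ I ∧ z (n - 1) ∉ I ∧
     e = s(z 0, z (n - 1))⟩

/-- The weakening operator on bl-graphs: add vertices `V` and extend every
branch label by a member of `Brs`. -/
def blwk (V : Set ℕ) (Brs : Set (Set ℕ)) (G : BLGraph) : BLGraph :=
  ⟨G.verts ∪ V, fun e X => ∃ Y Z, G.rel e Y ∧ Z ∈ Brs ∧ X = Y ∪ Z⟩

/-- The bl-identity graph `id_{A,C}` on a pair of dual formulas. -/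
def blid : NForm α → NForm α → BLGraph
  | .atom x _, .atom y _ => ⟨{x, y}, fun e X => e = s(x, y) ∧ X = {x, y}⟩
  | .or A1 A2, .and C1 C2 =>
      (blwk A2.names (BrF A2) (blid A1 C1)).union (blwk A1.names (BrF A1) (blid A2 C2))
  | .and A1 A2, .or C1 C2 =>
      (blwk C2.names (BrF C2) (blid A1 C1)).union (blwk C1.names (BrF C1) (blid A2 C2))
  | _, _ => ⟨∅, fun _ _ => False⟩

/-! ## Simple name graphs -/

/-- A simple name graph. -/
structure NGraph : Type where
  verts : Set ℕ
  edges : Set (Sym2 ℕ)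

/-- Subgraph relation `H ⊑ G`. -/
def NGraph.Sub (H G : NGraph) : Prop := H.verts ⊆ G.verts ∧ H.edges ⊆ G.edges

def NGraph.union (G H : NGraph) : NGraph := ⟨G.verts ∪ H.verts, G.edges ∪ H.edges⟩

/-- Induced subgraph `G↾_S`. -/
def NGraph.restrict (G : NGraph) (S : Set ℕ) : NGraph :=
  ⟨G.verts ∩ S, {e ∈ G.edges | ∀ v ∈ e, v ∈ S}⟩

/-- Alternating paths between simple name graphs through an interface. -/
def NAltPath (G H : NGraph) (I : Set ℕ) (n : ℕ) (z : ℕ → ℕ) : Prop :=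
  0 < n ∧
  (∀ i < n, ∀ j < n, z i = z j → i = j) ∧
  (∀ i, 0 < i → i + 1 < n → z i ∈ I) ∧
  ((∀ i, i + 1 < n →
      (Even i → s(z i, z (i + 1)) ∈ G.edges) ∧ (¬ Even i → s(z i, z (i + 1)) ∈ H.edges)) ∨
   (∀ i, i + 1 < n →
      (Even i → s(z i, z (i + 1)) ∈ H.edges) ∧ (¬ Even i → s(z i, z (i + 1)) ∈ G.edges)))

/-- Composition of simple name graphs over an interface. -/
def NGraph.comp (G H : NGraph) (I : Set ℕ) : NGraph :=
  ⟨(G.verts ∪ H.verts) \ I,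
   {e | ∃ x y, x ≠ y ∧ x ∈ (G.verts ∪ H.verts) \ I ∧ y ∈ (G.verts ∪ H.verts) \ I ∧
        e = s(x, y) ∧ ∃ n z, NAltPath G H I n z ∧ z 0 = x ∧ z (n - 1) = y}⟩

/-- The identity graph `Id_{A,C}` on a pair of dual formulas. -/
def idg : NForm α → NForm α → NGraph
  | .atom x _, .atom y _ => ⟨{x, y}, {s(x, y)}⟩
  | .or A1 A2, .and C1 C2 => (idg A1 C1).union (idg A2 C2)
  | .and A1 A2, .or C1 C2 => (idg A1 C1).union (idg A2 C2)
  | _, _ => ⟨∅, ∅⟩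

/-- The edgeless (weakening) graph on the names of `Γ`. -/
def wkg (Γ : Finset (NForm α)) : NGraph := ⟨snames Γ, ∅⟩

/-! ## Named GS4 derivations -/

/-- Named GS4 derivation trees. -/
inductive Deriv (α : Type) : Type
  | ax (Γ : Finset (NForm α)) (A C : NForm α)
  | cut (A : NForm α) (P Q : Deriv α)
  | sup (P Q : Deriv α)
  | orI (A B : NForm α) (P : Deriv α)
  | andI (A B : NForm α) (P Q : Deriv α)

/-- Conclusion of a derivation tree. -/
def concl : Deriv α → Finset (NForm α)
  | .ax Γ A C => insert A (insert C Γ)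
  | .cut A P _ => (concl P).erase A
  | .sup P _ => concl P
  | .orI A B P => insert (NForm.or A B) (((concl P).erase A).erase B)
  | .andI A B P _ => insert (NForm.and A B) ((concl P).erase A)

/-- Well-formedness of derivation trees w.r.t. the atom involution `bar`:
each rule is applied correctly to sharing-free named sequents. -/
def WF (bar : α → α) : Deriv α → Prop
  | .ax Γ A C =>
      A.shape = (negF bar C).shape ∧
      A.sharingFree ∧ C.sharingFree ∧ SFSet Γ ∧
      Disjoint A.names C.names ∧
      Disjoint A.names (snames Γ) ∧ Disjoint C.names (snames Γ)
  | .cut A P Q =>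
      WF bar P ∧ WF bar Q ∧
      ∃ Γ : Finset (NForm α), A ∉ Γ ∧ negF bar A ∉ Γ ∧
        concl P = insert A Γ ∧ concl Q = insert (negF bar A) Γ ∧
        A.sharingFree ∧ SFSet Γ ∧ Disjoint A.names (snames Γ)
  | .sup P Q => WF bar P ∧ WF bar Q ∧ concl P = concl Q
  | .orI A B P =>
      WF bar P ∧
      ∃ Γ : Finset (NForm α), A ∉ Γ ∧ B ∉ Γ ∧ A ≠ B ∧
        concl P = insert A (insert B Γ) ∧
        A.sharingFree ∧ B.sharingFree ∧ SFSet Γ ∧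
        Disjoint A.names B.names ∧
        Disjoint A.names (snames Γ) ∧ Disjoint B.names (snames Γ)
  | .andI A B P Q =>
      WF bar P ∧ WF bar Q ∧
      ∃ Γ : Finset (NForm α), A ∉ Γ ∧ B ∉ Γ ∧
        concl P = insert A Γ ∧ concl Q = insert B Γ ∧
        A.sharingFree ∧ B.sharingFree ∧ SFSet Γ ∧
        Disjoint A.names B.names ∧
        Disjoint A.names (snames Γ) ∧ Disjoint B.names (snames Γ)

/-- A derivation is cut-free if it contains no cut rule. -/
def CutFree : Deriv α → Prop
  | .ax _ _ _ => True
  | .cut _ _ _ => False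
  | .sup P Q => CutFree P ∧ CutFree Q
  | .orI _ _ P => CutFree P
  | .andI _ _ P Q => CutFree P ∧ CutFree Q

/-- The branch-labeled axiom graph `⟨⟨P⟩⟩` of a derivation. -/
def blaxg : Deriv α → BLGraph
  | .ax Γ A C => blwk (snames Γ) (BrS Γ) (blid A C)
  | .cut A P Q => BLGraph.comp (blaxg P) (blaxg Q) A.names
  | .sup P Q => (blaxg P).union (blaxg Q)
  | .orI _ _ P => blaxg P
  | .andI _ _ P Q => (blaxg P).union (blaxg Q)

/-- The (simple) axiom graph `⟦P⟧` of a derivation. -/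
def axg : Deriv α → NGraph
  | .ax Γ A C => (wkg Γ).union (idg A C)
  | .cut A P Q => NGraph.comp (axg P) (axg Q) A.names
  | .sup P Q => (axg P).union (axg Q)
  | .orI _ _ P => axg P
  | .andI _ _ P Q => (axg P).union (axg Q)

/-! ## Inversion and isolation -/

/-- Inversion of a disjunction `D ∨ E` in the conclusion. -/
def inv (D E : NForm α) : Deriv α → Deriv α
  | .ax Γ A C =>
      if A = NForm.or D E then
        match C with
        | .and C1 C2 =>
            .andI C1 C2 (.ax (insert E Γ) D C1) (.ax (insert D Γ) E C2)
        | _ => .ax Γ A C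
      else if C = NForm.or D E then
        match A with
        | .and A1 A2 =>
            .andI A1 A2 (.ax (insert E Γ) A1 D) (.ax (insert D Γ) A2 E)
        | _ => .ax Γ A C
      else
        .ax (insert D (insert E (Γ.erase (NForm.or D E)))) A C
  | .cut A P Q => .cut A (inv D E P) (inv D E Q)
  | .sup P Q => .sup (inv D E P) (inv D E Q)
  | .orI A B P => if A = D ∧ B = E then P else .orI A B (inv D E P)
  | .andI A B P Q => .andI A B (inv D E P) (inv D E Q)

/-- Left inversion of a conjunction `D ∧ E` in the conclusion. -/
def invl (D E : NForm α) : Deriv α → Deriv α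
  | .ax Γ A C =>
      if A = NForm.and D E then
        match C with
        | .or C1 C2 => .orI C1 C2 (.ax (insert C2 Γ) D C1)
        | _ => .ax Γ A C
      else if C = NForm.and D E then
        match A with
        | .or A1 A2 => .orI A1 A2 (.ax (insert A2 Γ) A1 D)
        | _ => .ax Γ A C
      else
        .ax (insert D (Γ.erase (NForm.and D E))) A C
  | .cut A P Q => .cut A (invl D E P) (invl D E Q)
  | .sup P Q => .sup (invl D E P) (invl D E Q)
  | .orI A B P => .orI A B (invl D E P)
  | .andI A B P Q => if A = D ∧ B = E then P else .andI A B (invl D E P) (invl D E Q)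

/-- Right inversion of a conjunction `D ∧ E` in the conclusion. -/
def invr (D E : NForm α) : Deriv α → Deriv α
  | .ax Γ A C =>
      if A = NForm.and D E then
        match C with
        | .or C1 C2 => .orI C1 C2 (.ax (insert C1 Γ) E C2)
        | _ => .ax Γ A C
      else if C = NForm.and D E then
        match A with
        | .or A1 A2 => .orI A1 A2 (.ax (insert A1 Γ) A2 E)
        | _ => .ax Γ A C
      else
        .ax (insert E (Γ.erase (NForm.and D E))) A C
  | .cut A P Q => .cut A (invr D E P) (invr D E Q)
  | .sup P Q => .sup (invr D E P) (invr D E Q)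
  | .orI A B P => .orI A B (invr D E P)
  | .andI A B P Q => if A = D ∧ B = E then Q else .andI A B (invr D E P) (invr D E Q)

/-- Isolation of a non-atomic formula in the conclusion. -/
def isl : NForm α → Deriv α → Deriv α
  | .or A B, P => .orI A B (inv A B P)
  | .and A B, P => .andI A B (invl A B P) (invr A B P)
  | .atom _ _, P => P

/-- Totality of a bl-graph w.r.t. a sharing-free named sequent. -/
def Total (bar : α → α) (G : BLGraph) (Γ : Finset (NForm α)) : Prop :=
  G.verts = snames Γ ∧
  G.Br = BrS Γ ∧
  ∀ x y : ℕ, s(x, y) ∈ G.Edges →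
    ∀ a b : α, HasAtomS Γ x a → HasAtomS Γ y b → a = bar b

end GS4

/-
Inversion rewrites a derivation only at the axioms and at the rules introducing the conjunction,
and there it merely discards the names of the lost conjunct. Union and composition of name graphs
commute with restriction to a set of names, in the sense of `⊑`. Restricting throughout to the
complement of the lost names, a set that does not depend on the position in the derivation, makes
the induction go through without following the sequents of the inverted derivation. At the root,
all vertices of `⟦P⟧` are names of `Γ, A ∧ B`, so that avoiding `B` means lying in `Γ, A`.
-/

namespace GS4

variable {α : Type}

theorem snames_insert (F : NForm α) (Γ : Finset (NForm α)) :
    snames (insert F Γ) = F.names ∪ snames Γ := by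
  simp [snames]

theorem snames_mono {Γ Δ : Finset (NForm α)} (h : Γ ⊆ Δ) : snames Γ ⊆ snames Δ :=
  Set.biUnion_subset_biUnion_left h

theorem names_subset_snames {F : NForm α} {Γ : Finset (NForm α)} (h : F ∈ Γ) :
    F.names ⊆ snames Γ :=
  Set.subset_biUnion_of_mem (u := NForm.names) h

theorem SFSet.disjoint_names_snames_erase {F : NForm α} {Γ : Finset (NForm α)} (hΓ : SFSet Γ)
    (hF : F ∈ Γ) : Disjoint F.names (snames (Γ.erase F)) :=
  Set.disjoint_iUnion₂_right.2 fun G hG =>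
    hΓ.2 F hF G (Finset.mem_of_mem_erase hG) (Finset.ne_of_mem_erase hG).symm

theorem names_negF (bar : α → α) (F : NForm α) : (negF bar F).names = F.names := by
  induction F with
  | atom => rfl
  | or A B ihA ihB => simp only [negF, NForm.names, ihA, ihB]
  | and A B ihA ihB => simp only [negF, NForm.names, ihA, ihB]

section NameGraphs

variable {G G' H H' : NGraph} {I S T : Set ℕ}

/-- The condition that makes an `NGraph` a graph: all endpoints of edges are vertices. -/
def NGraph.EdgesInVerts (G : NGraph) : Prop := ∀ e ∈ G.edges, ∀ v ∈ e, v ∈ G.verts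

theorem NGraph.EdgesInVerts.union (hG : G.EdgesInVerts) (hH : H.EdgesInVerts) :
    (G.union H).EdgesInVerts := by
  rintro e (he | he) v hv
  · exact Or.inl (hG e he v hv)
  · exact Or.inr (hH e he v hv)

theorem NGraph.edgesInVerts_comp (G H : NGraph) (I : Set ℕ) : (G.comp H I).EdgesInVerts := by
  rintro e ⟨x, y, -, hx, hy, rfl, -⟩ v hv
  rcases Sym2.mem_iff.1 hv with rfl | rfl
  · exact hx
  · exact hy

theorem NGraph.sub_union_left (G H : NGraph) : G.Sub (G.union H) :=
  ⟨Set.subset_union_left, Set.subset_union_left⟩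

theorem NGraph.sub_union_right (G H : NGraph) : H.Sub (G.union H) :=
  ⟨Set.subset_union_right, Set.subset_union_right⟩

theorem NGraph.Sub.restrict (h : G.Sub H) (hG : G.EdgesInVerts) (hS : G.verts ⊆ S) :
    G.Sub (H.restrict S) :=
  ⟨fun _ hx => ⟨h.1 hx, hS hx⟩, fun e he => ⟨h.2 he, fun v hv => hS (hG e he v hv)⟩⟩

theorem NGraph.Sub.of_restrict (h : G.Sub (H.restrict S)) : G.Sub H :=
  ⟨fun _ hx => (h.1 hx).1, fun _ he => (h.2 he).1⟩

theorem NGraph.Sub.restrict_of_inter_subset (h : G.Sub (H.restrict S)) (hH : H.EdgesInVerts)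
    (hT : H.verts ∩ S ⊆ T) : G.Sub (H.restrict T) :=
  ⟨fun _ hx => ⟨(h.1 hx).1, hT (h.1 hx)⟩, fun e he =>
    ⟨(h.2 he).1, fun v hv => hT ⟨hH e (h.2 he).1 v hv, (h.2 he).2 v hv⟩⟩⟩

theorem NGraph.Sub.union_restrict (h : G.Sub (H.restrict S)) (h' : G'.Sub (H'.restrict S)) :
    (G.union G').Sub ((H.union H').restrict S) :=
  ⟨Set.union_subset (fun _ hx => ⟨Or.inl (h.1 hx).1, (h.1 hx).2⟩)
      fun _ hx => ⟨Or.inr (h'.1 hx).1, (h'.1 hx).2⟩,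
    Set.union_subset (fun _ he => ⟨Or.inl (h.2 he).1, (h.2 he).2⟩)
      fun _ he => ⟨Or.inr (h'.2 he).1, (h'.2 he).2⟩⟩

theorem NAltPath.mono {n : ℕ} {z : ℕ → ℕ} (h : NAltPath G G' I n z)
    (hG : G.edges ⊆ H.edges) (hG' : G'.edges ⊆ H'.edges) : NAltPath H H' I n z := by
  obtain ⟨hn, hinj, hI, halt⟩ := h
  refine ⟨hn, hinj, hI, halt.imp ?_ ?_⟩
  · exact fun h i hi => ⟨fun he => hG ((h i hi).1 he), fun ho => hG' ((h i hi).2 ho)⟩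
  · exact fun h i hi => ⟨fun he => hG' ((h i hi).1 he), fun ho => hG ((h i hi).2 ho)⟩

theorem NGraph.Sub.comp (I : Set ℕ) (h : G.Sub H) (h' : G'.Sub H') :
    (G.comp G' I).Sub (H.comp H' I) := by
  have hV : (G.verts ∪ G'.verts) \ I ⊆ (H.verts ∪ H'.verts) \ I :=
    Set.sdiff_subset_sdiff_left (Set.union_subset_union h.1 h'.1)
  refine ⟨hV, ?_⟩
  rintro e ⟨x, y, hxy, hx, hy, he, n, z, hz, hzx, hzy⟩
  exact ⟨x, y, hxy, hV hx, hV hy, he, n, z, hz.mono h.2 h'.2, hzx, hzy⟩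

theorem NGraph.Sub.comp_restrict (I : Set ℕ) (h : G.Sub (H.restrict S))
    (h' : G'.Sub (H'.restrict S)) : (G.comp G' I).Sub ((H.comp H' I).restrict S) :=
  (h.of_restrict.comp I h'.of_restrict).restrict (G.edgesInVerts_comp G' I) <|
    Set.sdiff_subset.trans <|
      Set.union_subset (h.1.trans Set.inter_subset_right) (h'.1.trans Set.inter_subset_right)

end NameGraphs

variable {bar : α → α}

theorem exists_eq_or_of_shape_and_eq {A₁ A₂ C : NForm α}
    (h : (NForm.and A₁ A₂).shape = (negF bar C).shape) :
    ∃ C₁ C₂, C = .or C₁ C₂ ∧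
      A₁.shape = (negF bar C₁).shape ∧ A₂.shape = (negF bar C₂).shape := by
  cases C <;> simp_all [negF, NForm.shape]

theorem exists_eq_or_of_shape_eq_negF_and {A C₁ C₂ : NForm α}
    (h : A.shape = (negF bar (.and C₁ C₂)).shape) :
    ∃ A₁ A₂, A = .or A₁ A₂ ∧
      A₁.shape = (negF bar C₁).shape ∧ A₂.shape = (negF bar C₂).shape := by
  cases A <;> simp_all [negF, NForm.shape]

theorem edgesInVerts_idg (A C : NForm α) : (idg A C).EdgesInVerts := by
  fun_induction idg A C with
  | case1 => rintro e rfl v hv; exact Sym2.mem_iff.1 hv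
  | case2 _ _ _ _ ih₁ ih₂ => exact ih₁.union ih₂
  | case3 _ _ _ _ ih₁ ih₂ => exact ih₁.union ih₂
  | case4 => rintro e ⟨⟩

theorem verts_idg {A C : NForm α} (h : A.shape = (negF bar C).shape) :
    (idg A C).verts = A.names ∪ C.names := by
  fun_induction idg A C with
  | case1 => rfl
  | case2 _ _ _ _ ih₁ ih₂ =>
    obtain ⟨h₁, h₂⟩ := (Shape.or.injEq ..).mp h
    simp only [NGraph.union, NForm.names, ih₁ h₁, ih₂ h₂, Set.union_union_union_comm]
  | case3 _ _ _ _ ih₁ ih₂ =>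
    obtain ⟨h₁, h₂⟩ := (Shape.and.injEq ..).mp h
    simp only [NGraph.union, NForm.names, ih₁ h₁, ih₂ h₂, Set.union_union_union_comm]
  | case4 A C => cases A <;> cases C <;> grind [negF, NForm.shape]

theorem edgesInVerts_axg (P : Deriv α) : (axg P).EdgesInVerts := by
  induction P with
  | ax _ A C => exact NGraph.EdgesInVerts.union (by rintro e ⟨⟩) (edgesInVerts_idg A C)
  | cut A P Q => exact (axg P).edgesInVerts_comp (axg Q) A.names
  | sup _ _ ihP ihQ => exact ihP.union ihQ
  | orI _ _ _ ih => exact ih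
  | andI _ _ _ _ ihP ihQ => exact ihP.union ihQ

theorem verts_axg_ax {A C : NForm α} (h : A.shape = (negF bar C).shape)
    (Γ : Finset (NForm α)) : (axg (.ax Γ A C)).verts = snames (concl (.ax Γ A C)) := by
  rw [concl, snames_insert, snames_insert, ← Set.union_assoc, ← verts_idg h, Set.union_comm]
  rfl

theorem verts_axg_subset {P : Deriv α} (hP : WF bar P) : (axg P).verts ⊆ snames (concl P) := by
  induction P with
  | ax Γ A C => exact (verts_axg_ax hP.1 Γ).subset
  | cut A P Q ihP ihQ =>
    obtain ⟨hwP, hwQ, Γ, hA, -, hcP, hcQ, -⟩ := hP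
    have hvP : (axg P).verts ⊆ A.names ∪ snames Γ := by
      simpa only [hcP, snames_insert] using ihP hwP
    have hvQ : (axg Q).verts ⊆ A.names ∪ snames Γ := by
      simpa only [hcQ, snames_insert, names_negF] using ihQ hwQ
    rw [concl, hcP, Finset.erase_insert hA]
    exact Set.sdiff_subset_iff.2 (Set.union_subset hvP hvQ)
  | sup P Q ihP ihQ =>
    obtain ⟨hwP, hwQ, hc⟩ := hP
    exact Set.union_subset (ihP hwP) (hc ▸ ihQ hwQ)
  | orI A B P ih =>
    obtain ⟨hwP, Γ, hA, hB, hAB, hc, -⟩ := hP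
    have hv : (axg P).verts ⊆ A.names ∪ B.names ∪ snames Γ := by
      simpa only [hc, snames_insert, Set.union_assoc] using ih hwP
    rw [concl, hc, Finset.erase_insert (by simp [hA, hAB]), Finset.erase_insert hB, snames_insert]
    exact hv
  | andI A B P Q ihP ihQ =>
    obtain ⟨hwP, hwQ, Γ, hA, -, hcP, hcQ, -⟩ := hP
    have hvP : (axg P).verts ⊆ A.names ∪ snames Γ := by
      simpa only [hcP, snames_insert] using ihP hwP
    have hvQ : (axg Q).verts ⊆ B.names ∪ snames Γ := by
      simpa only [hcQ, snames_insert] using ihQ hwQ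
    rw [concl, hcP, Finset.erase_insert hA, snames_insert]
    exact Set.union_subset (hvP.trans (Set.union_subset_union_left _ Set.subset_union_left))
      (hvQ.trans (Set.union_subset_union_left _ Set.subset_union_right))

theorem axg_ax_sub_restrict {A C A' C' : NForm α} {Γ Γ' : Finset (NForm α)} {S : Set ℕ}
    (h : A.shape = (negF bar C).shape) (h' : A'.shape = (negF bar C').shape)
    (hE : (idg A C).edges ⊆ (idg A' C').edges)
    (hV : snames (concl (.ax Γ A C)) ⊆ snames (concl (.ax Γ' A' C')) ∩ S) :
    (axg (.ax Γ A C)).Sub ((axg (.ax Γ' A' C')).restrict S) := by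
  rw [← verts_axg_ax h, ← verts_axg_ax h'] at hV
  exact NGraph.Sub.restrict ⟨hV.trans Set.inter_subset_left, Set.union_subset_union_right ∅ hE⟩
    (edgesInVerts_axg _) (hV.trans Set.inter_subset_right)

theorem axg_inv_ax_sub_restrict_compl {Γ : Finset (NForm α)} {A C D E : NForm α}
    (hP : WF bar (.ax Γ A C)) (hDE : NForm.and D E ∈ concl (.ax Γ A C)) :
    (axg (invl D E (.ax Γ A C))).Sub ((axg (.ax Γ A C)).restrict E.namesᶜ) ∧
    (axg (invr D E (.ax Γ A C))).Sub ((axg (.ax Γ A C)).restrict D.namesᶜ) := by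
  obtain ⟨hAC, hA, hC, hΓ, hdAC, hdA, hdC⟩ := hP
  by_cases hAe : A = .and D E
  · subst hAe
    obtain ⟨C₁, C₂, rfl, hC₁, hC₂⟩ := exists_eq_or_of_shape_and_eq hAC
    simp only [invl, invr, if_true]
    refine ⟨axg_ax_sub_restrict hC₁ hAC Set.subset_union_left ?_,
      axg_ax_sub_restrict hC₂ hAC Set.subset_union_right ?_⟩ <;>
    · simp only [concl, snames_insert, NForm.names, NForm.sharingFree] at hA hdAC hdA ⊢
      grind
  by_cases hCe : C = .and D E
  · subst hCe
    obtain ⟨A₁, A₂, rfl, hA₁, hA₂⟩ := exists_eq_or_of_shape_eq_negF_and hAC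
    simp only [invl, invr, reduceCtorEq, if_true, if_false]
    refine ⟨axg_ax_sub_restrict hA₁ hAC Set.subset_union_left ?_,
      axg_ax_sub_restrict hA₂ hAC Set.subset_union_right ?_⟩ <;>
    · simp only [concl, snames_insert, NForm.names, NForm.sharingFree] at hC hdAC hdC ⊢
      grind
  · have hDEΓ : NForm.and D E ∈ Γ := by
      simpa [concl, Ne.symm hAe, Ne.symm hCe] using hDE
    have hsub := names_subset_snames hDEΓ
    have herase := snames_mono (Γ.erase_subset (.and D E))
    have hd := hΓ.disjoint_names_snames_erase hDEΓ
    have hsf := hΓ.1 _ hDEΓ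
    simp only [invl, invr, hAe, hCe, if_false]
    refine ⟨axg_ax_sub_restrict hAC hAC subset_rfl ?_,
      axg_ax_sub_restrict hAC hAC subset_rfl ?_⟩ <;>
    · simp only [concl, snames_insert, NForm.names, NForm.sharingFree] at hsub hdA hdC hd hsf ⊢
      grind

theorem axg_inv_sub_restrict_compl {D E : NForm α} {P : Deriv α} (hP : WF bar P)
    (hDE : NForm.and D E ∈ concl P) :
    (axg (invl D E P)).Sub ((axg P).restrict E.namesᶜ) ∧
    (axg (invr D E P)).Sub ((axg P).restrict D.namesᶜ) := by
  induction P with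
  | ax Γ A C => exact axg_inv_ax_sub_restrict_compl hP hDE
  | cut A P Q ihP ihQ =>
    obtain ⟨hwP, hwQ, Γ, hA, -, hcP, hcQ, -⟩ := hP
    have hΓ : NForm.and D E ∈ Γ := by simpa [concl, hcP, hA] using hDE
    have ⟨hlP, hrP⟩ := ihP hwP (by simp [hcP, hΓ])
    have ⟨hlQ, hrQ⟩ := ihQ hwQ (by simp [hcQ, hΓ])
    exact ⟨hlP.comp_restrict A.names hlQ, hrP.comp_restrict A.names hrQ⟩
  | sup P Q ihP ihQ =>
    obtain ⟨hwP, hwQ, hc⟩ := hP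
    have ⟨hlP, hrP⟩ := ihP hwP hDE
    have ⟨hlQ, hrQ⟩ := ihQ hwQ (hc ▸ hDE)
    exact ⟨hlP.union_restrict hlQ, hrP.union_restrict hrQ⟩
  | orI A B P ih =>
    obtain ⟨hwP, -⟩ := hP
    have hP : NForm.and D E ∈ concl P :=
      Finset.mem_of_mem_erase (Finset.mem_of_mem_erase
        (Finset.mem_of_mem_insert_of_ne hDE (by simp)))
    exact ih hwP hP
  | andI A B P Q ihP ihQ =>
    obtain ⟨hwP, hwQ, Γ, hA, -, hcP, hcQ, -, -, -, hdAB, hdA, hdB⟩ := hP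
    by_cases hprincipal : A = D ∧ B = E
    · obtain ⟨rfl, rfl⟩ := hprincipal
      have hvP : (axg P).verts ⊆ A.names ∪ snames Γ := by
        simpa only [hcP, snames_insert] using verts_axg_subset hwP
      have hvQ : (axg Q).verts ⊆ B.names ∪ snames Γ := by
        simpa only [hcQ, snames_insert] using verts_axg_subset hwQ
      simp only [invl, invr, and_self, if_true]
      exact ⟨((axg P).sub_union_left (axg Q)).restrict (edgesInVerts_axg P) (by grind),
        ((axg P).sub_union_right (axg Q)).restrict (edgesInVerts_axg Q) (by grind)⟩
    · have hne : NForm.and D E ≠ .and A B := by grind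
      have hΓ : NForm.and D E ∈ Γ := by simpa [concl, hcP, hA, hne] using hDE
      have ⟨hlP, hrP⟩ := ihP hwP (by simp [hcP, hΓ])
      have ⟨hlQ, hrQ⟩ := ihQ hwQ (by simp [hcQ, hΓ])
      simp only [invl, invr, hprincipal, if_false]
      exact ⟨hlP.union_restrict hlQ, hrP.union_restrict hrQ⟩

end GS4

/-- the axiom graphs of the conjunction inversions are
subgraphs of the corresponding restrictions of the axiom graph. -/
theorem GS4.axg_inv_and_sub {α : Type} (bar : α → α)
    (hbar : Function.Involutive bar) (hfix : ∀ a, bar a ≠ a)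
    (P : GS4.Deriv α) (hP : GS4.WF bar P)
    (Γ : Finset (GS4.NForm α)) (A B : GS4.NForm α)
    (hAB : GS4.NForm.and A B ∉ Γ)
    (hc : GS4.concl P = insert (GS4.NForm.and A B) Γ) :
    (GS4.axg (GS4.invl A B P)).Sub ((GS4.axg P).restrict (GS4.snames Γ ∪ A.names)) ∧
    (GS4.axg (GS4.invr A B P)).Sub ((GS4.axg P).restrict (GS4.snames Γ ∪ B.names)) := by
  have hverts : (GS4.axg P).verts ⊆ A.names ∪ B.names ∪ GS4.snames Γ := by
    simpa only [hc, GS4.snames_insert, GS4.NForm.names] using GS4.verts_axg_subset hP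
  have hmem : GS4.NForm.and A B ∈ GS4.concl P := hc ▸ Finset.mem_insert_self ..
  have ⟨hl, hr⟩ := GS4.axg_inv_sub_restrict_compl hP hmem
  have hG := GS4.edgesInVerts_axg P
  exact ⟨hl.restrict_of_inter_subset hG (by grind), hr.restrict_of_inter_subset hG (by grind)⟩
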